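/- arXiv:2501.02942 — 2 statements merged into one kernel-verified Lean document; each statement's English description precedes it below -/
import Mathlib

section
/- Let n ≥ m ≥ 1 and let B_1,…,B_r ∈ ℝ^{n×m} satisfy Σ_{k=1}^r B_k^⊤B_k = I_m and Σ_{k=1}^r B_kB_k^⊤ ⪯ I_n. Let z_1,…,z_r be independent standard Gaussian real random variables on a probability space and set G = Σ_{k=1}^r z_k B_k. Then E[σmax(G)²] ≤ min(m, 2·log(2m) + 2). -/
open MeasureTheory ProbabilityTheory Matrix

/-- The largest singular value (spectral norm) of a real matrix. -/
noncomputable def sigmaMax {n m : ℕ} (G : Matrix (Fin n) (Fin m) ℝ) : ℝ :=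
  ‖LinearMap.toContinuousLinearMap (Matrix.toEuclideanLin G)‖

/-!
The Hermitian dilation turns `G` into a symmetric Gaussian series `X = ∑ k, z k • H k` with
`∑ k, H k * H k ⪯ 1` and `tr X ^ (2p) = 2 tr (Gᵀ G) ^ p`. Gaussian integration by parts writes
`E tr X ^ (2p+2)` as the sum over `k` and over `i + j = 2p` of `E tr (H k X^i H k X^j)`. In an
eigenbasis of `X`, rearrangement bounds each term by `E tr (H k ^ 2 X ^ (2p))`, so
`E tr X ^ (2p+2) ≤ (2p+1) E tr X ^ (2p)` and hence `E tr (Gᵀ G) ^ p ≤ m (2p-1)‼`.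

Now let `x = E σ²` with `σ = σmax(G)`. Jensen's inequality gives
`x ^ p ≤ E σ ^ (2p) ≤ E tr (Gᵀ G) ^ p ≤ m (2p-1)‼` for every `p`. The case `p = 1` is `x ≤ m`.
Since `(2p)! = 2^p p! (2p-1)‼`, summing `x ^ (2p) / (2p)!` yields `cosh x ≤ m exp (x / 2)`, that is
`x ≤ 2 log (2m)`.
-/

open scoped Nat NNReal

section GaussianIntegrationByParts

lemma hasDerivAt_gaussianPDFReal (μ : ℝ) (v : ℝ≥0) (x : ℝ) :
    HasDerivAt (gaussianPDFReal μ v) (-((x - μ) / v) * gaussianPDFReal μ v x) x := by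
  have hexponent : HasDerivAt (fun y : ℝ => -(y - μ) ^ 2 / (2 * v)) (-((x - μ) / v)) x := by
    refine ((((hasDerivAt_id x).sub_const μ).pow 2).neg.div_const (2 * v : ℝ)).congr_deriv ?_
    simp only [id, Nat.cast_ofNat, Nat.add_one_sub_one, pow_one, mul_one, neg_div]
    rw [mul_div_mul_left _ _ two_ne_zero]
  exact (hexponent.exp.const_mul _).congr_deriv (by rw [gaussianPDFReal]; ring)

lemma integrable_gaussianReal_iff {μ : ℝ} {v : ℝ≥0} (hv : v ≠ 0) {f : ℝ → ℝ} :
    Integrable f (gaussianReal μ v) ↔ Integrable fun x => gaussianPDFReal μ v x * f x := by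
  rw [gaussianReal_of_var_ne_zero μ hv, integrable_withDensity_iff_integrable_smul'
    (measurable_gaussianPDF μ v) (ae_of_all _ fun _ => gaussianPDF_lt_top)]
  simp only [toReal_gaussianPDF, smul_eq_mul]

lemma integral_sub_mul_gaussianReal {μ : ℝ} {v : ℝ≥0} {f f' : ℝ → ℝ}
    (hf : ∀ x, HasDerivAt f (f' x) x) (hf_int : Integrable f (gaussianReal μ v))
    (hxf_int : Integrable (fun x => (x - μ) * f x) (gaussianReal μ v))
    (hf'_int : Integrable f' (gaussianReal μ v)) :
    ∫ x, (x - μ) * f x ∂gaussianReal μ v = v * ∫ x, f' x ∂gaussianReal μ v := by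
  rcases eq_or_ne v 0 with rfl | hv
  · simp
  have hv' : (v : ℝ) ≠ 0 := NNReal.coe_ne_zero.2 hv
  rw [integrable_gaussianReal_iff hv] at hf_int hxf_int hf'_int
  have hparts := integral_mul_deriv_eq_deriv_mul_of_integrable (u := f) (u' := f')
    (fun x _ => hf x) (fun x _ => hasDerivAt_gaussianPDFReal μ v x)
    ((hxf_int.const_mul (-(v : ℝ)⁻¹)).congr
      (ae_of_all _ fun x => by simp only [Pi.mul_apply]; ring))
    (hf'_int.congr (ae_of_all _ fun x => mul_comm _ _))
    (hf_int.congr (ae_of_all _ fun x => mul_comm _ _))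
  simp only [integral_gaussianReal_eq_integral_smul hv, smul_eq_mul]
  calc ∫ x, gaussianPDFReal μ v x * ((x - μ) * f x)
      = -v * ∫ x, f x * (-((x - μ) / v) * gaussianPDFReal μ v x) := by
        rw [← integral_const_mul]
        congr 1 with x
        field_simp
    _ = v * ∫ x, gaussianPDFReal μ v x * f' x := by
        rw [hparts, neg_mul_neg]
        simp only [mul_comm (f' _)]

lemma integrable_pow_gaussianReal (μ : ℝ) (v : ℝ≥0) (a : ℕ) :
    Integrable (fun x => x ^ a) (gaussianReal μ v) :=
  (memLp_id_gaussianReal a).integrable_norm_pow'.mono' (by fun_prop)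
    (ae_of_all _ fun x => by simp)

lemma integral_pow_succ_gaussianReal (a : ℕ) :
    ∫ x, x ^ (a + 1) ∂gaussianReal 0 1 = a * ∫ x, x ^ (a - 1) ∂gaussianReal 0 1 := by
  have h := integral_sub_mul_gaussianReal (μ := 0) (v := 1) (hasDerivAt_pow a)
    (integrable_pow_gaussianReal 0 1 a)
    (by simpa [← pow_succ'] using integrable_pow_gaussianReal 0 1 (a + 1))
    ((integrable_pow_gaussianReal 0 1 (a - 1)).const_mul a)
  simpa [← pow_succ', integral_const_mul] using h

/-- The law of a vector of independent standard Gaussian variables indexed by `κ`. -/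
noncomputable abbrev stdGaussianPi (κ : Type*) [Fintype κ] : Measure (κ → ℝ) :=
  Measure.pi fun _ => gaussianReal 0 1

variable {κ : Type*} [Fintype κ]

lemma integrable_eval_stdGaussianPi (P : MvPolynomial κ ℝ) :
    Integrable (fun z => MvPolynomial.eval z P) (stdGaussianPi κ) := by
  simp only [MvPolynomial.eval_eq']
  exact integrable_finsetSum _ fun s _ => Integrable.const_mul
    (.fintype_prod (f := fun i x => x ^ s i) fun i => integrable_pow_gaussianReal 0 1 (s i)) _

lemma integral_eval_monomial_stdGaussianPi (s : κ →₀ ℕ) (c : ℝ) :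
    ∫ z, MvPolynomial.eval z (MvPolynomial.monomial s c) ∂stdGaussianPi κ
      = c * ∏ i, ∫ x, x ^ s i ∂gaussianReal 0 1 := by
  simp only [MvPolynomial.eval_monomial, integral_const_mul,
    Finsupp.prod_fintype s (fun i a => (_ : κ → ℝ) i ^ a) fun _ => pow_zero _]
  rw [integral_fintype_prod_eq_prod fun i (x : ℝ) => x ^ s i]

lemma integral_eval_X_mul_stdGaussianPi (k : κ) (P : MvPolynomial κ ℝ) :
    ∫ z, MvPolynomial.eval z (MvPolynomial.X k * P) ∂stdGaussianPi κ
      = ∫ z, MvPolynomial.eval z (MvPolynomial.pderiv k P) ∂stdGaussianPi κ := by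
  classical
  induction P using MvPolynomial.induction_on' with
  | monomial s c =>
    have hoff : ∀ i ∈ Finset.univ.erase k,
        ∫ x, x ^ (Finsupp.single k 1 + s : κ →₀ ℕ) i ∂gaussianReal 0 1
          = ∫ x, x ^ (s - Finsupp.single k 1 : κ →₀ ℕ) i ∂gaussianReal 0 1 := fun i hi => by
      simp [(Finset.ne_of_mem_erase hi).symm]
    rw [MvPolynomial.pderiv_monomial, MvPolynomial.X, MvPolynomial.monomial_mul,
      integral_eval_monomial_stdGaussianPi, integral_eval_monomial_stdGaussianPi,
      ← Finset.mul_prod_erase _ _ (Finset.mem_univ k),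
      ← Finset.mul_prod_erase Finset.univ
        (fun i => ∫ x, x ^ (s - Finsupp.single k 1 : κ →₀ ℕ) i ∂gaussianReal 0 1)
        (Finset.mem_univ k),
      Finset.prod_congr rfl hoff]
    simp only [Finsupp.add_apply, Finsupp.tsub_apply, Finsupp.single_eq_same, add_comm 1,
      integral_pow_succ_gaussianReal]
    ring
  | add P Q hP hQ =>
    simp only [mul_add, map_add]
    rw [integral_add (integrable_eval_stdGaussianPi _) (integrable_eval_stdGaussianPi _),
      integral_add (integrable_eval_stdGaussianPi _) (integrable_eval_stdGaussianPi _), hP, hQ]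

end GaussianIntegrationByParts

section TraceInequalities

lemma pow_mul_pow_add_pow_mul_pow_le (x y : ℝ) {a b : ℕ} (hab : Even (a + b)) :
    x ^ a * y ^ b + x ^ b * y ^ a ≤ x ^ (a + b) + y ^ (a + b) := by
  wlog hxy : |x| ≤ |y| generalizing x y
  · simpa only [add_comm, mul_comm] using this y x (le_of_not_ge hxy)
  have hrearrange : |x| ^ a * |y| ^ b + |y| ^ a * |x| ^ b ≤ |x| ^ (a + b) + |y| ^ (a + b) := by
    simpa only [pow_add] using mul_add_mul_le_mul_add_mul
      (pow_le_pow_left₀ (abs_nonneg x) hxy a) (pow_le_pow_left₀ (abs_nonneg x) hxy b)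
  calc x ^ a * y ^ b + x ^ b * y ^ a ≤ |x ^ a * y ^ b| + |x ^ b * y ^ a| :=
        add_le_add (le_abs_self _) (le_abs_self _)
    _ = |x| ^ a * |y| ^ b + |y| ^ a * |x| ^ b := by simp only [abs_mul, abs_pow, mul_comm]
    _ ≤ x ^ (a + b) + y ^ (a + b) := by rwa [← hab.pow_abs x, ← hab.pow_abs y]

variable {ι : Type*} [Fintype ι]

open scoped MatrixOrder Matrix.Norms.L2Operator in
lemma trace_mul_nonneg_of_posSemidef {V W : Matrix ι ι ℝ} (hV : V.PosSemidef) (hW : W.PosSemidef) :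
    0 ≤ (V * W).trace := by
  classical
  obtain ⟨C, rfl⟩ := CStarAlgebra.nonneg_iff_eq_star_mul_self.mp hW.nonneg
  rw [← mul_assoc, trace_mul_cycle]
  exact (hV.mul_mul_conjTranspose_same C).trace_nonneg

variable [DecidableEq ι]

lemma trace_mul_diagonal_mul_mul_diagonal {K : Matrix ι ι ℝ} (hK : K.IsHermitian) (d e : ι → ℝ) :
    (K * diagonal d * K * diagonal e).trace = ∑ i, ∑ j, K i j ^ 2 * (d j * e i) := by
  simp only [trace, diag_apply, mul_diagonal, mul_apply (M := K * diagonal d), Finset.sum_mul]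
  refine Finset.sum_congr rfl fun i _ => Finset.sum_congr rfl fun j _ => ?_
  rw [← hK.apply j i, star_trivial]
  ring

lemma trace_mul_pow_mul_mul_pow_le {H X : Matrix ι ι ℝ} (hH : H.IsHermitian) (hX : X.IsHermitian)
    {a b : ℕ} (hab : Even (a + b)) :
    (H * X ^ a * H * X ^ b).trace ≤ (H * H * X ^ (a + b)).trace := by
  let conj := Unitary.conjStarAlgAut ℝ (Matrix ι ι ℝ) hX.eigenvectorUnitary
  let d := hX.eigenvalues
  obtain ⟨K, rfl⟩ : ∃ K, conj K = H := conj.surjective H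
  have hK : K.IsHermitian := conj.injective <| (map_star conj K).trans hH
  have hX_eq : X = conj (diagonal d) := hX.spectral_theorem
  have htrace (a b : ℕ) :
      (conj K * X ^ a * conj K * X ^ b).trace = ∑ i, ∑ j, K i j ^ 2 * (d j ^ a * d i ^ b) := by
    rw [hX_eq, ← map_pow, ← map_pow, ← map_mul, ← map_mul, ← map_mul, trace_map, diagonal_pow,
      diagonal_pow, trace_mul_diagonal_mul_mul_diagonal hK]
    rfl
  have hsymm (f : ι → ι → ℝ) :
      ∑ i, ∑ j, K i j ^ 2 * f i j = (∑ i, ∑ j, K i j ^ 2 * (f i j + f j i)) / 2 := by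
    have hswap : ∑ i, ∑ j, K i j ^ 2 * f j i = ∑ i, ∑ j, K i j ^ 2 * f i j := by
      rw [Finset.sum_comm]
      exact Finset.sum_congr rfl fun i _ => Finset.sum_congr rfl fun j _ => by
        rw [← hK.apply i j, star_trivial]
    simp only [mul_add, Finset.sum_add_distrib, hswap, add_self_div_two]
  have hpow_zero : conj K * conj K * X ^ (a + b) = conj K * X ^ 0 * conj K * X ^ (a + b) := by
    rw [pow_zero, mul_one]
  rw [hpow_zero, htrace, htrace]
  refine (hsymm _).trans_le (le_of_le_of_eq ?_ (hsymm _).symm)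
  gcongr (∑ i, ∑ j, K i j ^ 2 * ?_) / 2 with i _ j _
  simpa [add_comm, mul_comm] using pow_mul_pow_add_pow_mul_pow_le (d i) (d j) hab

lemma trace_mul_le_trace {V W : Matrix ι ι ℝ} (hV : (1 - V).PosSemidef) (hW : W.PosSemidef) :
    (V * W).trace ≤ W.trace := by
  have h := trace_mul_nonneg_of_posSemidef hV hW
  rwa [sub_mul, one_mul, trace_sub, sub_nonneg] at h

open scoped Matrix.Norms.L2Operator

lemma norm_eq_norm_eigenvalues {A : Matrix ι ι ℝ} (hA : A.IsHermitian) :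
    ‖A‖ = ‖hA.eigenvalues‖ := by
  conv_lhs => rw [hA.spectral_theorem, Unitary.conjStarAlgAut_apply,
    CStarRing.norm_mul_mem_unitary _ (Unitary.star_mem hA.eigenvectorUnitary.2),
    CStarRing.norm_mem_unitary_mul _ hA.eigenvectorUnitary.2, l2_opNorm_diagonal]
  rfl

lemma trace_pow_eq_sum_eigenvalues_pow {A : Matrix ι ι ℝ} (hA : A.IsHermitian) (p : ℕ) :
    (A ^ p).trace = ∑ i, hA.eigenvalues i ^ p := by
  conv_lhs => rw [hA.spectral_theorem, ← map_pow, trace_map, diagonal_pow, trace_diagonal]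
  rfl

lemma norm_pow_le_trace_pow [Nonempty ι] {A : Matrix ι ι ℝ} (hA : A.PosSemidef) (p : ℕ) :
    ‖A‖ ^ p ≤ (A ^ p).trace := by
  obtain ⟨i, hi⟩ := Finite.exists_max hA.isHermitian.eigenvalues
  have hnorm : ‖A‖ ≤ hA.isHermitian.eigenvalues i := by
    rw [norm_eq_norm_eigenvalues hA.isHermitian, pi_norm_le_iff_of_nonempty]
    exact fun j => (Real.norm_of_nonneg (hA.eigenvalues_nonneg j)).trans_le (hi j)
  calc ‖A‖ ^ p ≤ hA.isHermitian.eigenvalues i ^ p := by gcongr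
    _ ≤ ∑ j, hA.isHermitian.eigenvalues j ^ p :=
      Finset.single_le_sum (fun j _ => pow_nonneg (hA.eigenvalues_nonneg j) p) (Finset.mem_univ i)
    _ = (A ^ p).trace := (trace_pow_eq_sum_eigenvalues_pow hA.isHermitian p).symm

lemma norm_sq_pow_le_trace_transpose_mul_self_pow {κ : Type*} [Fintype κ] [Nonempty ι]
    (G : Matrix κ ι ℝ) (p : ℕ) : (‖G‖ ^ 2) ^ p ≤ ((Gᵀ * G) ^ p).trace := by
  classical
  rw [sq, ← l2_opNorm_conjTranspose_mul_self, conjTranspose_eq_transpose_of_trivial]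
  exact norm_pow_le_trace_pow (posSemidef_conjTranspose_mul_self G) p

end TraceInequalities

section GaussianSeries

open Finset.HasAntidiagonal (antidiagonal)

lemma map_derivation_mul {R A l m n : Type*} [CommSemiring R] [CommSemiring A] [Algebra R A]
    [Fintype m] (D : Derivation R A A) (M : Matrix l m A) (N : Matrix m n A) :
    (M * N).map D = M.map D * N + M * N.map D := by
  ext i j
  simp only [map_apply, mul_apply, map_sum, Derivation.leibniz, smul_eq_mul,
    Matrix.add_apply, Finset.sum_add_distrib]
  simp only [add_comm, mul_comm]

lemma map_derivation_pow_succ {R A n : Type*} [CommSemiring R] [CommSemiring A] [Algebra R A]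
    [Fintype n] [DecidableEq n] (D : Derivation R A A) (M : Matrix n n A) (a : ℕ) :
    (M ^ (a + 1)).map D = ∑ ij ∈ antidiagonal a, M ^ ij.1 * M.map D * M ^ ij.2 := by
  induction a with
  | zero => simp
  | succ a ih =>
    rw [pow_succ, map_derivation_mul, ih, Finset.Nat.sum_antidiagonal_succ', Finset.sum_mul,
      add_comm]
    simp only [pow_succ, pow_zero, mul_assoc, mul_one]

/-- The matrix series `∑ k, c k • B k` with coefficient matrices `B k`. For standard Gaussian
coefficients this is the Gaussian series; polynomial coefficients are used in `genericSeries`. -/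
def matrixSeries {κ m n R : Type*} [Fintype κ] [Semiring R] (B : κ → Matrix m n R) (c : κ → R) :
    Matrix m n R :=
  ∑ k, c k • B k

/-- The matrix series whose coefficients are the indeterminates of `MvPolynomial κ ℝ`. Powers and
traces of the Gaussian series are evaluations of those of `genericSeries`, so that Gaussian
integration by parts reduces to the formal derivations `MvPolynomial.pderiv`. -/
noncomputable def genericSeries {κ m n : Type*} [Fintype κ] (B : κ → Matrix m n ℝ) :
    Matrix m n (MvPolynomial κ ℝ) :=
  matrixSeries (fun k => (B k).map MvPolynomial.C) MvPolynomial.X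

lemma map_eval_map_C {κ m n : Type*} (K : Matrix m n ℝ) (z : κ → ℝ) :
    (K.map MvPolynomial.C).map (MvPolynomial.eval z) = K := by
  ext i j
  simp

lemma map_eval_genericSeries {κ m n : Type*} [Fintype κ] (B : κ → Matrix m n ℝ) (z : κ → ℝ) :
    (genericSeries B).map (MvPolynomial.eval z) = matrixSeries B z := by
  ext i j
  simp [genericSeries, matrixSeries, Matrix.sum_apply]

lemma map_pderiv_genericSeries {κ m n : Type*} [Fintype κ] (B : κ → Matrix m n ℝ) (k : κ) :
    (genericSeries B).map (MvPolynomial.pderiv k) = (B k).map MvPolynomial.C := by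
  classical
  ext i j
  simp [genericSeries, matrixSeries, Matrix.sum_apply, MvPolynomial.pderiv_X, Pi.single_apply]

lemma isHermitian_matrixSeries {κ n : Type*} [Fintype κ] {H : κ → Matrix n n ℝ}
    (hH : ∀ k, (H k).IsHermitian) (c : κ → ℝ) : (matrixSeries H c).IsHermitian := by
  simp only [matrixSeries, IsHermitian, conjTranspose_sum, conjTranspose_smul, star_trivial,
    (hH _).eq]

variable {κ ι : Type*} [Fintype κ] [Fintype ι]

lemma integrable_trace_map_eval (P : Matrix ι ι (MvPolynomial κ ℝ)) :
    Integrable (fun z => (P.map (MvPolynomial.eval z)).trace) (stdGaussianPi κ) := by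
  simpa only [AddMonoidHom.map_trace] using integrable_eval_stdGaussianPi P.trace

variable [DecidableEq ι]

lemma integrable_trace_mul_pow_mul_mul_pow (H : κ → Matrix ι ι ℝ) (K L : Matrix ι ι ℝ) (a b : ℕ) :
    Integrable (fun z => (K * matrixSeries H z ^ a * L * matrixSeries H z ^ b).trace)
      (stdGaussianPi κ) := by
  have h := integrable_trace_map_eval (K.map MvPolynomial.C * genericSeries H ^ a *
    L.map MvPolynomial.C * genericSeries H ^ b)
  simpa only [Matrix.map_mul, Matrix.map_pow, map_eval_map_C, map_eval_genericSeries] using h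

lemma integrable_trace_mul_pow (H : κ → Matrix ι ι ℝ) (K : Matrix ι ι ℝ) (a : ℕ) :
    Integrable (fun z => (K * matrixSeries H z ^ a).trace) (stdGaussianPi κ) := by
  simpa only [mul_one, pow_zero] using integrable_trace_mul_pow_mul_mul_pow H K 1 a 0

lemma integral_mul_trace_mul_pow_succ (H : κ → Matrix ι ι ℝ) (k : κ) (K : Matrix ι ι ℝ) (a : ℕ) :
    ∫ z, z k * (K * matrixSeries H z ^ (a + 1)).trace ∂stdGaussianPi κ
      = ∑ ij ∈ antidiagonal a,
        ∫ z, (K * matrixSeries H z ^ ij.1 * H k * matrixSeries H z ^ ij.2).trace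
          ∂stdGaussianPi κ := by
  set G := genericSeries H with hG
  set P := K.map MvPolynomial.C * G ^ (a + 1) with hP
  have hpderiv : P.map (MvPolynomial.pderiv k) = ∑ ij ∈ antidiagonal a,
      (K.map MvPolynomial.C * G ^ ij.1) * ((H k).map MvPolynomial.C * G ^ ij.2) := by
    have hconst : (K.map MvPolynomial.C).map (MvPolynomial.pderiv k) = 0 := by
      ext i j
      simp
    rw [hP, map_derivation_mul, map_derivation_pow_succ, map_pderiv_genericSeries, hconst,
      zero_mul, zero_add, Finset.mul_sum]
    simp only [mul_assoc]
  calc ∫ z, z k * (K * matrixSeries H z ^ (a + 1)).trace ∂stdGaussianPi κ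
      = ∫ z, MvPolynomial.eval z (MvPolynomial.X k * P.trace) ∂stdGaussianPi κ := by
        simp only [map_mul, MvPolynomial.eval_X, AddMonoidHom.map_trace, hP, hG,
          Matrix.map_mul, Matrix.map_pow, map_eval_map_C, map_eval_genericSeries]
    _ = ∫ z, MvPolynomial.eval z (P.map (MvPolynomial.pderiv k)).trace ∂stdGaussianPi κ := by
        rw [integral_eval_X_mul_stdGaussianPi, AddMonoidHom.map_trace]
    _ = ∑ ij ∈ antidiagonal a,
        ∫ z, (K * matrixSeries H z ^ ij.1 * H k * matrixSeries H z ^ ij.2).trace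
          ∂stdGaussianPi κ := by
        simp only [hpderiv, trace_sum, map_sum]
        rw [integral_finsetSum _ fun _ _ => integrable_eval_stdGaussianPi _]
        simp only [AddMonoidHom.map_trace, Matrix.map_mul, hG,
          Matrix.map_pow, map_eval_map_C, map_eval_genericSeries, mul_assoc]

lemma integral_trace_matrixSeries_pow_add_two (H : κ → Matrix ι ι ℝ) (a : ℕ) :
    ∫ z, (matrixSeries H z ^ (a + 2)).trace ∂stdGaussianPi κ
      = ∑ k, ∑ ij ∈ antidiagonal a,
        ∫ z, (H k * matrixSeries H z ^ ij.1 * H k * matrixSeries H z ^ ij.2).trace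
          ∂stdGaussianPi κ := by
  have hexpand (z : κ → ℝ) : (matrixSeries H z ^ (a + 2)).trace
      = ∑ k, z k * (H k * matrixSeries H z ^ (a + 1)).trace := by
    rw [pow_succ']
    nth_rw 1 [matrixSeries]
    simp only [Finset.sum_mul, trace_sum, smul_mul, trace_smul, smul_eq_mul]
  have hint (k : κ) : Integrable (fun z => z k * (H k * matrixSeries H z ^ (a + 1)).trace)
      (stdGaussianPi κ) := by
    have h := integrable_eval_stdGaussianPi (MvPolynomial.X k *
      ((H k).map MvPolynomial.C * genericSeries H ^ (a + 1)).trace)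
    simpa only [_root_.map_mul, MvPolynomial.eval_X, AddMonoidHom.map_trace, Matrix.map_mul,
      Matrix.map_pow, map_eval_map_C, map_eval_genericSeries] using h
  simp only [hexpand]
  rw [integral_finsetSum _ fun k _ => hint k]
  simp only [integral_mul_trace_mul_pow_succ]

variable {H : κ → Matrix ι ι ℝ}

lemma integral_trace_matrixSeries_pow_le_mul (hH : ∀ k, (H k).IsHermitian)
    (hV : (1 - ∑ k, H k * H k).PosSemidef) (p : ℕ) :
    ∫ z, (matrixSeries H z ^ (2 * p + 2)).trace ∂stdGaussianPi κ
      ≤ (2 * p + 1) * ∫ z, (matrixSeries H z ^ (2 * p)).trace ∂stdGaussianPi κ := by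
  have hS (z : κ → ℝ) : (matrixSeries H z).IsHermitian := isHermitian_matrixSeries hH z
  calc ∫ z, (matrixSeries H z ^ (2 * p + 2)).trace ∂stdGaussianPi κ
      = ∑ k, ∑ ij ∈ antidiagonal (2 * p),
          ∫ z, (H k * matrixSeries H z ^ ij.1 * H k * matrixSeries H z ^ ij.2).trace
            ∂stdGaussianPi κ := integral_trace_matrixSeries_pow_add_two H (2 * p)
    _ ≤ ∑ k, ∑ _ ∈ antidiagonal (2 * p),
          ∫ z, (H k * H k * matrixSeries H z ^ (2 * p)).trace ∂stdGaussianPi κ := by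
        refine Finset.sum_le_sum fun k _ => Finset.sum_le_sum fun ij hij => ?_
        have hsum : ij.1 + ij.2 = 2 * p := Finset.HasAntidiagonal.mem_antidiagonal.1 hij
        rw [← hsum]
        exact integral_mono (integrable_trace_mul_pow_mul_mul_pow _ _ _ _ _)
          (integrable_trace_mul_pow _ _ _) fun z =>
            trace_mul_pow_mul_mul_pow_le (hH k) (hS z) (hsum ▸ even_two_mul p)
    _ = (2 * p + 1) * ∫ z, ((∑ k, H k * H k) * matrixSeries H z ^ (2 * p)).trace
          ∂stdGaussianPi κ := by
        simp only [Finset.sum_const, Finset.Nat.card_antidiagonal, Finset.sum_mul, trace_sum]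
        rw [integral_finsetSum _ fun k _ => integrable_trace_mul_pow H _ _, Finset.mul_sum]
        simp
    _ ≤ (2 * p + 1) * ∫ z, (matrixSeries H z ^ (2 * p)).trace ∂stdGaussianPi κ := by
        have hint : Integrable (fun z => (matrixSeries H z ^ (2 * p)).trace) (stdGaussianPi κ) := by
          simpa only [one_mul] using integrable_trace_mul_pow H 1 (2 * p)
        refine mul_le_mul_of_nonneg_left (integral_mono (integrable_trace_mul_pow H _ _) hint
          fun z => trace_mul_le_trace hV ?_) (by positivity)
        rw [two_mul, pow_add]
        nth_rw 1 [← ((hS z).pow p).eq]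
        exact posSemidef_conjTranspose_mul_self _

lemma integral_trace_matrixSeries_pow_le (hH : ∀ k, (H k).IsHermitian)
    (hV : (1 - ∑ k, H k * H k).PosSemidef) (p : ℕ) :
    ∫ z, (matrixSeries H z ^ (2 * p + 2)).trace ∂stdGaussianPi κ
      ≤ (∑ k, H k * H k).trace * (2 * p + 1)‼ := by
  induction p with
  | zero => simp [integral_trace_matrixSeries_pow_add_two, trace_sum]
  | succ p ih =>
    calc ∫ z, (matrixSeries H z ^ (2 * (p + 1) + 2)).trace ∂stdGaussianPi κ
        ≤ (2 * ↑(p + 1) + 1) * ∫ z, (matrixSeries H z ^ (2 * p + 2)).trace ∂stdGaussianPi κ :=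
          integral_trace_matrixSeries_pow_le_mul hH hV (p + 1)
      _ ≤ (2 * ↑(p + 1) + 1) * ((∑ k, H k * H k).trace * (2 * p + 1)‼) := by gcongr
      _ = (∑ k, H k * H k).trace * (2 * (p + 1) + 1)‼ := by
          rw [show 2 * (p + 1) + 1 = 2 * p + 1 + 2 by ring, Nat.doubleFactorial_add_two]
          push_cast
          ring

end GaussianSeries

section HermitianDilation

/-- The Hermitian dilation `[0, B; Bᵀ, 0]` of a rectangular real matrix `B`, a symmetric matrix
whose even powers have diagonal blocks `(B * Bᵀ) ^ p` and `(Bᵀ * B) ^ p`. -/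
def hermitianDilation {m n : Type*} (B : Matrix m n ℝ) : Matrix (m ⊕ n) (m ⊕ n) ℝ :=
  fromBlocks 0 B Bᵀ 0

lemma isHermitian_hermitianDilation {m n : Type*} (B : Matrix m n ℝ) :
    (hermitianDilation B).IsHermitian :=
  isHermitian_zero.fromBlocks (conjTranspose_eq_transpose_of_trivial B) isHermitian_zero

lemma hermitianDilation_matrixSeries {κ m n : Type*} [Fintype κ] (B : κ → Matrix m n ℝ)
    (z : κ → ℝ) :
    hermitianDilation (matrixSeries B z) = matrixSeries (fun k => hermitianDilation (B k)) z := by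
  ext (i | i) (j | j) <;> simp [hermitianDilation, matrixSeries, Matrix.sum_apply]

lemma trace_fromBlocks {R m n : Type*} [AddCommMonoid R] [Fintype m] [Fintype n]
    (A : Matrix m m R) (B : Matrix m n R) (C : Matrix n m R) (D : Matrix n n R) :
    (fromBlocks A B C D).trace = A.trace + D.trace :=
  Fintype.sum_sum_type _

lemma posSemidef_fromBlocks_diagonal {m n : Type*} [Finite m] [Finite n] {A : Matrix m m ℝ}
    {D : Matrix n n ℝ} (hA : A.PosSemidef) (hD : D.PosSemidef) :
    (fromBlocks A 0 0 D).PosSemidef := by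
  cases nonempty_fintype m
  cases nonempty_fintype n
  refine .of_dotProduct_mulVec_nonneg
    (hA.isHermitian.fromBlocks conjTranspose_zero hD.isHermitian) fun x => ?_
  rw [star_trivial, fromBlocks_mulVec, zero_mulVec, zero_mulVec, add_zero, zero_add]
  nth_rw 1 [← Sum.elim_comp_inl_inr x]
  rw [sumElim_dotProduct_sumElim]
  exact add_nonneg (hA.dotProduct_mulVec_nonneg _) (hD.dotProduct_mulVec_nonneg _)

lemma trace_pow_succ_mul_comm {R m n : Type*} [CommSemiring R] [Fintype m] [Fintype n]
    [DecidableEq m] [DecidableEq n] (A : Matrix m n R) (B : Matrix n m R) (p : ℕ) :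
    ((A * B) ^ (p + 1)).trace = ((B * A) ^ (p + 1)).trace := by
  have hshift : (A * B) ^ (p + 1) = A * (B * A) ^ p * B := by
    induction p with
    | zero => simp
    | succ p ih => simp only [pow_succ _ (p + 1), ih, pow_succ (B * A) p, Matrix.mul_assoc]
  rw [hshift, trace_mul_comm, ← Matrix.mul_assoc, pow_succ']

variable {m n : Type*} [Fintype m] [Fintype n]

lemma hermitianDilation_mul_self (B : Matrix m n ℝ) :
    hermitianDilation B * hermitianDilation B = fromBlocks (B * Bᵀ) 0 0 (Bᵀ * B) := by
  simp [hermitianDilation, fromBlocks_multiply]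

lemma sum_hermitianDilation_mul_self {κ : Type*} [Fintype κ] (B : κ → Matrix m n ℝ) :
    ∑ k, hermitianDilation (B k) * hermitianDilation (B k)
      = fromBlocks (∑ k, B k * (B k)ᵀ) 0 0 (∑ k, (B k)ᵀ * B k) := by
  simp only [hermitianDilation_mul_self]
  ext (i | i) (j | j) <;> simp [Matrix.sum_apply]

variable [DecidableEq n]

lemma trace_hermitianDilation_pow [DecidableEq m] (B : Matrix m n ℝ) (p : ℕ) :
    (hermitianDilation B ^ (2 * p + 2)).trace = 2 * ((Bᵀ * B) ^ (p + 1)).trace := by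
  rw [← mul_add_one 2 p, pow_mul, sq, hermitianDilation_mul_self, fromBlocks_diagonal_pow,
    trace_fromBlocks, trace_pow_succ_mul_comm B, two_mul]

lemma integrable_trace_transpose_mul_self_pow {κ : Type*} [Fintype κ]
    (B : κ → Matrix m n ℝ) (p : ℕ) :
    Integrable (fun z => (((matrixSeries B z)ᵀ * matrixSeries B z) ^ p).trace)
      (stdGaussianPi κ) := by
  classical
  rcases p with _ | p
  · simp
  have h := (integrable_trace_mul_pow (fun k => hermitianDilation (B k)) 1 (2 * p + 2)).div_const 2
  simpa only [one_mul, ← hermitianDilation_matrixSeries, trace_hermitianDilation_pow,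
    mul_div_cancel_left₀ _ (two_ne_zero (α := ℝ))] using h

variable [DecidableEq m] {κ : Type*} [Fintype κ] {B : κ → Matrix m n ℝ}

lemma posSemidef_one_sub_sum_hermitianDilation_mul_self
    (hBtB : (1 - ∑ k, (B k)ᵀ * B k).PosSemidef) (hBBt : (1 - ∑ k, B k * (B k)ᵀ).PosSemidef) :
    (1 - ∑ k, hermitianDilation (B k) * hermitianDilation (B k)).PosSemidef := by
  convert posSemidef_fromBlocks_diagonal hBBt hBtB using 1
  rw [sum_hermitianDilation_mul_self, ← fromBlocks_one]
  ext (i | i) (j | j) <;> simp [-fromBlocks_one]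

lemma integral_trace_transpose_mul_self_pow_le (hBtB : (1 - ∑ k, (B k)ᵀ * B k).PosSemidef)
    (hBBt : (1 - ∑ k, B k * (B k)ᵀ).PosSemidef) (p : ℕ) :
    ∫ z, (((matrixSeries B z)ᵀ * matrixSeries B z) ^ p).trace ∂stdGaussianPi κ
      ≤ Fintype.card n * (2 * p - 1)‼ := by
  rcases p with _ | p
  · simp
  have htrace : (∑ k, (B k)ᵀ * B k).trace ≤ Fintype.card n := by
    have h := hBtB.trace_nonneg
    rwa [trace_sub, trace_one, sub_nonneg] at h
  have hdilation := integral_trace_matrixSeries_pow_le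
    (fun k => isHermitian_hermitianDilation (B k))
    (posSemidef_one_sub_sum_hermitianDilation_mul_self hBtB hBBt) p
  simp only [← hermitianDilation_matrixSeries, trace_hermitianDilation_pow, integral_const_mul,
    sum_hermitianDilation_mul_self, trace_fromBlocks, trace_sum, trace_mul_comm (B _)] at hdilation
  rw [← two_mul, ← trace_sum, mul_assoc] at hdilation
  exact (le_of_mul_le_mul_left hdilation two_pos).trans (by gcongr; rfl)

end HermitianDilation

section SpectralNorm

lemma le_two_mul_log_of_pow_le_mul_doubleFactorial {x c : ℝ} (hx : 0 ≤ x)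
    (h : ∀ p : ℕ, x ^ p ≤ c * (2 * p - 1)‼) : x ≤ 2 * Real.log (2 * c) := by
  have hc : 1 ≤ c := by simpa using h 0
  have hfactorial (p : ℕ) : ((2 * p)! : ℝ) = 2 ^ p * p ! * (2 * p - 1)‼ := by
    rcases p with _ | p
    · simp
    rw [mul_add_one, Nat.factorial_eq_mul_doubleFactorial, ← mul_add_one 2 p,
      Nat.doubleFactorial_two_mul]
    push_cast
    rfl
  have hterm (p : ℕ) : x ^ (2 * p) / (2 * p)! ≤ c * ((x / 2) ^ p / p !) := by
    have hdf : (0 : ℝ) < (2 * p - 1)‼ := by exact_mod_cast Nat.doubleFactorial_pos _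
    calc x ^ (2 * p) / (2 * p)! = x ^ p * x ^ p / (2 ^ p * p ! * (2 * p - 1)‼) := by
          rw [hfactorial, two_mul, pow_add]
      _ ≤ x ^ p * (c * (2 * p - 1)‼) / (2 ^ p * p ! * (2 * p - 1)‼) := by
          gcongr
          exact h p
      _ = c * ((x / 2) ^ p / p !) := by
          rw [div_pow]
          field_simp [hdf.ne']
  have hexp : HasSum (fun p : ℕ => c * ((x / 2) ^ p / p !)) (c * Real.exp (x / 2)) := by
    rw [Real.exp_eq_exp_ℝ]
    exact (NormedSpace.expSeries_div_hasSum_exp (x / 2)).mul_left c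
  have hcosh : Real.cosh x ≤ c * Real.exp (x / 2) := hasSum_le hterm (Real.hasSum_cosh x) hexp
  have hexp_le : Real.exp (x / 2) ≤ 2 * c := by
    have hsplit : Real.exp x = Real.exp (x / 2) * Real.exp (x / 2) := by
      rw [← Real.exp_add, add_halves]
    rw [Real.cosh_eq, hsplit] at hcosh
    nlinarith [Real.exp_pos (-x), Real.exp_pos (x / 2)]
  linarith [(Real.le_log_iff_exp_le (by linarith)).2 hexp_le]

lemma pow_integral_le_integral_pow {α : Type*} [MeasurableSpace α] {μ : Measure α}
    [IsProbabilityMeasure μ] {f : α → ℝ} (hf_nonneg : 0 ≤ f) {p : ℕ} (hf : Integrable f μ)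
    (hfp : Integrable (fun x => f x ^ p) μ) : (∫ x, f x ∂μ) ^ p ≤ ∫ x, f x ^ p ∂μ :=
  (convexOn_pow p).map_integral_le (continuous_pow p).continuousOn isClosed_Ici
    (ae_of_all _ hf_nonneg) hf hfp

open scoped Matrix.Norms.L2Operator

lemma sigmaMax_eq_norm {n m : ℕ} (G : Matrix (Fin n) (Fin m) ℝ) : sigmaMax G = ‖G‖ := rfl

variable {κ m n : Type*} [Fintype κ] [Fintype m] [Fintype n] [DecidableEq n]

lemma continuous_norm_matrixSeries (B : κ → Matrix m n ℝ) :
    Continuous fun z => ‖matrixSeries B z‖ := by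
  unfold matrixSeries
  fun_prop

variable [Nonempty n]

lemma integrable_norm_sq_pow_matrixSeries (B : κ → Matrix m n ℝ) (p : ℕ) :
    Integrable (fun z => (‖matrixSeries B z‖ ^ 2) ^ p) (stdGaussianPi κ) := by
  classical
  refine (integrable_trace_transpose_mul_self_pow B p).mono'
    (((continuous_norm_matrixSeries B).pow 2).pow p).aestronglyMeasurable (ae_of_all _ fun z => ?_)
  rw [Real.norm_of_nonneg (by positivity)]
  exact norm_sq_pow_le_trace_transpose_mul_self_pow _ p

variable [DecidableEq m] {B : κ → Matrix m n ℝ}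

lemma integral_norm_sq_matrixSeries_pow_le (hBtB : (1 - ∑ k, (B k)ᵀ * B k).PosSemidef)
    (hBBt : (1 - ∑ k, B k * (B k)ᵀ).PosSemidef) (p : ℕ) :
    (∫ z, ‖matrixSeries B z‖ ^ 2 ∂stdGaussianPi κ) ^ p ≤ Fintype.card n * (2 * p - 1)‼ :=
  calc (∫ z, ‖matrixSeries B z‖ ^ 2 ∂stdGaussianPi κ) ^ p
      ≤ ∫ z, (‖matrixSeries B z‖ ^ 2) ^ p ∂stdGaussianPi κ :=
        pow_integral_le_integral_pow (fun _ => sq_nonneg _)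
          (by simpa only [pow_one] using integrable_norm_sq_pow_matrixSeries B 1)
          (integrable_norm_sq_pow_matrixSeries B p)
    _ ≤ ∫ z, (((matrixSeries B z)ᵀ * matrixSeries B z) ^ p).trace ∂stdGaussianPi κ :=
        integral_mono (integrable_norm_sq_pow_matrixSeries B p)
          (integrable_trace_transpose_mul_self_pow B p)
          fun z => norm_sq_pow_le_trace_transpose_mul_self_pow _ p
    _ ≤ Fintype.card n * (2 * p - 1)‼ := integral_trace_transpose_mul_self_pow_le hBtB hBBt p

lemma integral_norm_sq_matrixSeries_le (hBtB : (1 - ∑ k, (B k)ᵀ * B k).PosSemidef)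
    (hBBt : (1 - ∑ k, B k * (B k)ᵀ).PosSemidef) :
    ∫ z, ‖matrixSeries B z‖ ^ 2 ∂stdGaussianPi κ
      ≤ min (Fintype.card n : ℝ) (2 * Real.log (2 * Fintype.card n)) := by
  have hmoments := integral_norm_sq_matrixSeries_pow_le hBtB hBBt
  exact le_min (by simpa using hmoments 1) <|
    le_two_mul_log_of_pow_le_mul_doubleFactorial (integral_nonneg fun _ => sq_nonneg _) hmoments

end SpectralNorm

lemma hasLaw_stdGaussianPi {κ Ω : Type*} [Fintype κ] [MeasurableSpace Ω] {μ : Measure Ω}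
    {z : κ → Ω → ℝ} (hindep : iIndepFun z μ)
    (hgauss : ∀ k, Measure.map (z k) μ = gaussianReal 0 1) :
    HasLaw (fun ω k => z k ω) (stdGaussianPi κ) μ := by
  have hz (k : κ) : AEMeasurable (z k) μ := .of_map_ne_zero <| by
    rw [hgauss k]
    exact IsProbabilityMeasure.ne_zero _
  exact hindep.hasLaw_pi fun k => ⟨hz k, hgauss k⟩

theorem stmt1_general {κ : Type*} [Fintype κ] {n m : ℕ} (hm : 1 ≤ m)
    (B : κ → Matrix (Fin n) (Fin m) ℝ)
    (hBtB : (1 - ∑ k, (B k)ᵀ * B k).PosSemidef)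
    (hBBt : (1 - ∑ k, B k * (B k)ᵀ).PosSemidef)
    {Ω : Type*} [MeasurableSpace Ω] (μ : Measure Ω)
    (z : κ → Ω → ℝ)
    (hindep : iIndepFun z μ)
    (hgauss : ∀ k, Measure.map (z k) μ = gaussianReal 0 1) :
    ∫ ω, (sigmaMax (∑ k, z k ω • B k)) ^ 2 ∂μ
      ≤ min (m : ℝ) (2 * Real.log (2 * m)) := by
  have : Nonempty (Fin m) := ⟨⟨0, hm⟩⟩
  calc ∫ ω, (sigmaMax (∑ k, z k ω • B k)) ^ 2 ∂μ
      = ∫ x, sigmaMax (matrixSeries B x) ^ 2 ∂stdGaussianPi κ :=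
        (hasLaw_stdGaussianPi hindep hgauss).integral_comp
          ((continuous_norm_matrixSeries B).pow 2).aestronglyMeasurable
    _ ≤ min (m : ℝ) (2 * Real.log (2 * m)) := by
        simpa only [sigmaMax_eq_norm, Fintype.card_fin] using
          integral_norm_sq_matrixSeries_le hBtB hBBt

/-- Lemma 2.1, expectation bound.
For a Gaussian matrix series `G = ∑ₖ zₖ Bₖ` with `∑ₖ Bₖᵀ Bₖ = Iₘ` and
`∑ₖ Bₖ Bₖᵀ ⪯ Iₙ`, we have `E[σmax(G)²] ≤ min(m, 2 log(2m) + 2)`. -/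
theorem stmt1 {n m r : ℕ} (hm : 1 ≤ m) (hmn : m ≤ n)
    (B : Fin r → Matrix (Fin n) (Fin m) ℝ)
    (hBtB : ∑ k, (B k)ᵀ * B k = 1)
    (hBBt : ((1 : Matrix (Fin n) (Fin n) ℝ) - ∑ k, B k * (B k)ᵀ).PosSemidef)
    {Ω : Type*} [MeasurableSpace Ω] (μ : Measure Ω) [IsProbabilityMeasure μ]
    (z : Fin r → Ω → ℝ)
    (hindep : iIndepFun z μ)
    (hgauss : ∀ k, Measure.map (z k) μ = gaussianReal 0 1) :
    ∫ ω, (sigmaMax (∑ k, z k ω • B k)) ^ 2 ∂μ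
      ≤ min (m : ℝ) (2 * Real.log (2 * m) + 2) :=
  (stmt1_general hm B (by simp [hBtB, PosSemidef.zero]) hBBt μ z hindep hgauss).trans
    (min_le_min_left _ (le_add_of_nonneg_right zero_le_two))
end

section
/- Let n ≥ m ≥ 1 with nm ≥ 2, and let B_1,…,B_r ∈ ℝ^{n×m} satisfy Σ_{k=1}^r B_k^⊤B_k = I_m and Σ_{k=1}^r B_kB_k^⊤ ⪯ I_n. Let z_1,…,z_r be independent standard Gaussian real random variables, set G = Σ_{k=1}^r z_k B_k, and let W = Σ_{k=1}^r vec(B_k)vec(B_k)^⊤. Define β_{n,m} := inf_{λ∈[0,1]} ∫₀^∞ (1 + 2tm(1−λ)/(nm−1))^{−(nm−1)/2} · (1 + 2tmλ)^{−3/2} dt. Then σmax(G) > 0 almost surely and for every v ∈ ℝ^{nm}, E[(v^⊤vec(G))²/σmax(G)²] ≥ β_{n,m} · v^⊤Wv. -/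
open MeasureTheory ProbabilityTheory Matrix

/-- `vec(U)`: stacking the columns of `U`, indexed by (column, row) pairs. -/
def vecM {n m : ℕ} (U : Matrix (Fin n) (Fin m) ℝ) : Fin m × Fin n → ℝ :=
  fun p => U p.2 p.1

/-- `β_{n,m} = inf_{λ∈[0,1]} ∫₀^∞ (1 + 2tm(1−λ)/(nm−1))^{−(nm−1)/2} (1 + 2tmλ)^{−3/2} dt`. -/
noncomputable def betaNM (n m : ℕ) : ℝ :=
  ⨅ l : Set.Icc (0 : ℝ) 1,
    ∫ t in Set.Ioi (0 : ℝ),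
      (1 + 2 * t * m * (1 - (l : ℝ)) / ((n : ℝ) * m - 1)) ^ (-(((n : ℝ) * m - 1) / 2))
        * (1 + 2 * t * m * (l : ℝ)) ^ (-(3 / 2 : ℝ))

/-!
The spectral norm is at most the Frobenius norm, so it suffices to bound `E[⟪v, X⟫² / ‖X‖²]` for the
centered Gaussian vector `X = vec(G)`, whose total variance is `tr W = m`.

In a basis of eigenvectors of the covariance the coordinates of `X` are independent with variances
`wᵢ`. Write `1 / ‖X‖²` as `∫₀^∞ exp(-t‖X‖²) dt`. The weight `exp(-t‖X‖²)` turns the Gaussian measure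
into the Gaussian measure with variances `wᵢ / (1 + 2twᵢ)`, of total mass `∏ₖ (1 + 2twₖ)^(-1/2)`.
The `i`-th coordinate therefore contributes
`wᵢ ∫₀^∞ (1 + 2twᵢ)⁻¹ ∏ₖ (1 + 2twₖ)^(-1/2) dt`.
By AM-GM on the factors `k ≠ i`, this is at least `wᵢ` times the integral in `β` at `λ = wᵢ / tr W`;
the exponent `3/2` is `1` from the reduced variance plus `1/2` from the total mass.
-/

open scoped NNReal ENNReal

section Tilting

theorem withDensity_exp_neg_mul_sq_gaussianReal (v t : ℝ≥0) :
    (gaussianReal 0 v).withDensity (fun x ↦ ENNReal.ofReal (Real.exp (-(t * x ^ 2))))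
      = (1 + 2 * t * v) ^ (-(1 / 2) : ℝ) • gaussianReal 0 (v / (1 + 2 * t * v)) := by
  rcases eq_or_ne v 0 with rfl | hv
  · rw [gaussianReal_zero_var, withDensity_congr_ae (ae_eq_dirac _)]
    exact (withDensity_const _).trans (by simp)
  have hd : (0 : ℝ) < 1 + 2 * t * v := by positivity
  rw [gaussianReal_of_var_ne_zero 0 hv, gaussianReal_of_var_ne_zero 0 (by positivity),
    ← withDensity_mul _ (by fun_prop) (by fun_prop), ENNReal.smul_def,
    ← withDensity_smul _ (by fun_prop)]
  congr 1 with x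
  have hexp : Real.exp (-x ^ 2 / (2 * (v / (1 + 2 * t * v))))
      = Real.exp (-x ^ 2 / (2 * v)) * Real.exp (-(t * x ^ 2)) := by
    rw [← Real.exp_add]
    congr 1
    field_simp
    ring
  have hsqrt : (√(2 * Real.pi * (v / (1 + 2 * t * v))))⁻¹
      = (√(2 * Real.pi * v))⁻¹ * √(1 + 2 * t * v) := by
    rw [← mul_div_assoc, Real.sqrt_div (by positivity), inv_div, div_eq_inv_mul]
  have := (Real.sqrt_pos.2 hd).ne'
  simp only [Pi.mul_apply, Pi.smul_apply, smul_eq_mul, gaussianPDF, gaussianPDFReal]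
  rw [← ENNReal.ofReal_coe_nnreal, ← ENNReal.ofReal_mul (by positivity),
    ← ENNReal.ofReal_mul (by positivity)]
  congr 1
  push_cast
  rw [sub_zero, hexp, hsqrt, Real.rpow_neg hd.le, ← Real.sqrt_eq_rpow]
  field_simp

variable {ι : Type*} [Fintype ι] {α : ι → Type*} [∀ i, MeasurableSpace (α i)]

theorem withDensity_prod_pi (μ : ∀ i, Measure (α i)) [∀ i, IsProbabilityMeasure (μ i)]
    {f : ∀ i, α i → ℝ≥0∞} (hf : ∀ i, Measurable (f i))
    [∀ i, SigmaFinite ((μ i).withDensity (f i))] :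
    (Measure.pi μ).withDensity (fun x ↦ ∏ i, f i (x i))
      = Measure.pi fun i ↦ (μ i).withDensity (f i) := by
  refine (Measure.pi_eq fun s hs ↦ ?_).symm
  have hg : ∀ i, Measurable ((s i).indicator (f i)) := fun i ↦ (hf i).indicator (hs i)
  have hind : ∀ x : ∀ i, α i, (Set.univ.pi s).indicator (fun x ↦ ∏ i, f i (x i)) x
      = ∏ i, (s i).indicator (f i) (x i) := fun x ↦ by
    classical
    simp only [Set.indicator_apply, Set.mem_univ_pi]
    split_ifs with h
    · exact Finset.prod_congr rfl fun i _ ↦ (if_pos (h i)).symm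
    · obtain ⟨i, hi⟩ := not_forall.1 h
      exact (Finset.prod_eq_zero (Finset.mem_univ i) (if_neg hi)).symm
  rw [withDensity_apply _ (.univ_pi hs), ← lintegral_indicator (.univ_pi hs)]
  simp only [hind]
  rw [lintegral_prod_eq_prod_lintegral_of_indepFun Finset.univ
    (fun i (x : ∀ i, α i) ↦ (s i).indicator (f i) (x i))
    (iIndepFun_pi fun i ↦ (hg i).aemeasurable) fun i ↦ (hg i).comp (measurable_pi_apply i)]
  refine Finset.prod_congr rfl fun i _ ↦ ?_
  rw [withDensity_apply _ (hs i), ← lintegral_indicator (hs i),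
    (measurePreserving_eval μ i).lintegral_comp (hg i)]

theorem pi_smul_measure (c : ι → ℝ≥0) (μ : ∀ i, Measure (α i)) [∀ i, SigmaFinite (μ i)] :
    Measure.pi (fun i ↦ c i • μ i) = (∏ i, c i) • Measure.pi μ := by
  refine Measure.pi_eq fun s _ ↦ ?_
  simp only [Measure.smul_apply, Measure.pi_pi, ENNReal.smul_def, smul_eq_mul,
    ENNReal.ofNNReal_finsetProd, Finset.prod_mul_distrib]

end Tilting

section GaussianProduct

variable {ι : Type*} [Fintype ι]

theorem withDensity_exp_neg_mul_sum_sq_pi_gaussianReal (w : ι → ℝ≥0) (t : ℝ≥0) :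
    (Measure.pi fun i ↦ gaussianReal 0 (w i)).withDensity
        (fun x ↦ ENNReal.ofReal (Real.exp (-(t * ∑ i, x i ^ 2))))
      = (∏ i, (1 + 2 * t * w i) ^ (-(1 / 2) : ℝ)) •
          Measure.pi fun i ↦ gaussianReal 0 (w i / (1 + 2 * t * w i)) := by
  have hprod : ∀ x : ι → ℝ, ENNReal.ofReal (Real.exp (-(t * ∑ i, x i ^ 2)))
      = ∏ i, ENNReal.ofReal (Real.exp (-(t * x i ^ 2))) := fun x ↦ by
    rw [← ENNReal.ofReal_prod_of_nonneg fun i _ ↦ (Real.exp_pos _).le, ← Real.exp_sum,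
      Finset.sum_neg_distrib, Finset.mul_sum]
  simp only [hprod]
  rw [withDensity_prod_pi _ (f := fun _ y ↦ ENNReal.ofReal (Real.exp (-(t * y ^ 2))))
    fun _ ↦ by fun_prop]
  simp only [withDensity_exp_neg_mul_sq_gaussianReal]
  exact pi_smul_measure _ _

theorem memLp_two_sum_mul_pi_gaussianReal (w : ι → ℝ≥0) (u : ι → ℝ) :
    MemLp (fun x : ι → ℝ ↦ ∑ i, u i * x i) 2 (Measure.pi fun i ↦ gaussianReal 0 (w i)) :=
  memLp_finsetSum _ fun i _ ↦
    (IsGaussian.memLp_two_id.comp_measurePreserving (measurePreserving_eval _ i)).const_mul (u i)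

theorem integral_sq_sum_mul_pi_gaussianReal (w : ι → ℝ≥0) (u : ι → ℝ) :
    ∫ x, (∑ i, u i * x i) ^ 2 ∂(Measure.pi fun i ↦ gaussianReal 0 (w i))
      = ∑ i, u i ^ 2 * w i := by
  have hmean : ∫ x : ι → ℝ, ∑ i, u i * x i ∂(Measure.pi fun i ↦ gaussianReal 0 (w i)) = 0 := by
    rw [integral_finsetSum _ fun i _ ↦ (integrable_eval IsGaussian.integrable_id).const_mul (u i)]
    simp [integral_const_mul, integral_eval]
  rw [← variance_of_integral_eq_zero
    (memLp_two_sum_mul_pi_gaussianReal w u).aestronglyMeasurable.aemeasurable hmean,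
    ← Finset.sum_fn,
    variance_sum_pi (X := fun i y ↦ u i * y) fun i ↦ IsGaussian.memLp_two_id.const_mul (u i)]
  exact Finset.sum_congr rfl fun i _ ↦ by rw [variance_const_mul, variance_fun_id_gaussianReal]

end GaussianProduct

section Laplace

theorem ofReal_div_eq_lintegral_exp_neg_mul {a b : ℝ} (ha : 0 ≤ a) (hb : 0 < b) :
    ENNReal.ofReal (a / b)
      = ∫⁻ t in Set.Ioi (0 : ℝ), ENNReal.ofReal (a * Real.exp (-(t * b))) := by
  have hint : IntegrableOn (fun t ↦ a * Real.exp (-b * t)) (Set.Ioi 0) :=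
    (integrableOn_exp_mul_Ioi (neg_lt_zero.2 hb) 0).const_mul a
  have hval : ∫ t in Set.Ioi (0 : ℝ), a * Real.exp (-b * t) = a / b := by
    rw [integral_const_mul, integral_exp_mul_Ioi (neg_lt_zero.2 hb)]
    simp [div_eq_mul_inv]
  rw [← hval, ofReal_integral_eq_lintegral_ofReal hint (.of_forall fun _ ↦ by positivity)]
  simp only [neg_mul, mul_comm b]

theorem lintegral_ofReal_div_eq_lintegral_exp {α : Type*} [MeasurableSpace α] {ν : Measure α}
    [SFinite ν] {f g : α → ℝ} (hf : Measurable f) (hg : Measurable g) (hf0 : 0 ≤ f) (hg0 : 0 ≤ g)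
    (hfg : ∀ x, g x = 0 → f x = 0) :
    ∫⁻ x, ENNReal.ofReal (f x / g x) ∂ν
      = ∫⁻ t in Set.Ioi (0 : ℝ), ∫⁻ x, ENNReal.ofReal (f x * Real.exp (-(t * g x))) ∂ν := by
  rw [lintegral_lintegral_swap (by fun_prop)]
  refine lintegral_congr fun x ↦ ?_
  rcases (hg0 x).eq_or_lt with hx | hx
  · simp [hfg x hx.symm]
  · exact ofReal_div_eq_lintegral_exp_neg_mul (hf0 x) hx

end Laplace

section Kernel

/-- The integrand of `betaNM` at the parameter `l`, with `N` for the number `n * m` of entries and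
`M` for the total variance `m`. -/
noncomputable def betaKernel (N M l t : ℝ) : ℝ :=
  (1 + 2 * t * M * (1 - l) / (N - 1)) ^ (-((N - 1) / 2)) * (1 + 2 * t * M * l) ^ (-(3 / 2 : ℝ))

/-- The constant `betaNM` for a Gaussian vector in dimension `N` with total variance `M`: `N` and
`M` take the place of `n * m` and `m`. -/
noncomputable def gaussianBeta (N M : ℝ) : ℝ :=
  ⨅ l : Set.Icc (0 : ℝ) 1, ∫ t in Set.Ioi (0 : ℝ), betaKernel N M l t

variable {N M l t : ℝ}

theorem betaKernel_nonneg (hN : 1 ≤ N) (hM : 0 ≤ M) (hl : l ∈ Set.Icc (0 : ℝ) 1) (ht : 0 ≤ t) :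
    0 ≤ betaKernel N M l t := by
  have hl0 := hl.1
  have hl1 := sub_nonneg.2 hl.2
  have := sub_nonneg.2 hN
  unfold betaKernel
  positivity

theorem gaussianBeta_le_integral_betaKernel (hN : 1 ≤ N) (hM : 0 ≤ M)
    (hl : l ∈ Set.Icc (0 : ℝ) 1) :
    gaussianBeta N M ≤ ∫ t in Set.Ioi (0 : ℝ), betaKernel N M l t := by
  refine ciInf_le (f := fun l : Set.Icc (0 : ℝ) 1 ↦ ∫ t in Set.Ioi (0 : ℝ), betaKernel N M l t)
    ⟨0, ?_⟩ ⟨l, hl⟩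
  rintro _ ⟨l, rfl⟩
  exact setIntegral_nonneg measurableSet_Ioi fun _ ht ↦ betaKernel_nonneg hN hM l.2 (le_of_lt ht)

theorem ofReal_gaussianBeta_le_lintegral (hN : 1 ≤ N) (hM : 0 ≤ M) (hl : l ∈ Set.Icc (0 : ℝ) 1) :
    ENNReal.ofReal (gaussianBeta N M)
      ≤ ∫⁻ t in Set.Ioi (0 : ℝ), ENNReal.ofReal (betaKernel N M l t) := calc
  _ ≤ ENNReal.ofReal (∫ t in Set.Ioi (0 : ℝ), betaKernel N M l t) :=
    ENNReal.ofReal_le_ofReal (gaussianBeta_le_integral_betaKernel hN hM hl)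
  _ ≤ ∫⁻ t in Set.Ioi (0 : ℝ), ‖betaKernel N M l t‖ₑ :=
    (Real.ofReal_le_enorm _).trans (enorm_integral_le_lintegral_enorm _)
  _ = _ := setLIntegral_congr_fun measurableSet_Ioi fun _ ht ↦
    Real.enorm_of_nonneg (betaKernel_nonneg hN hM hl (le_of_lt ht))

theorem rpow_neg_avg_le_prod_rpow_neg {ι : Type*} {s : Finset ι} (hs : s.Nonempty) {a : ι → ℝ}
    (ha : ∀ i ∈ s, 0 < a i) {p : ℝ} (hp : 0 ≤ p) :
    ((∑ i ∈ s, a i) / s.card) ^ (-(s.card * p)) ≤ ∏ i ∈ s, a i ^ (-p) := by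
  have hc : (0 : ℝ) < s.card := by exact_mod_cast hs.card_pos
  have hmean : (∏ i ∈ s, a i) ^ (s.card : ℝ)⁻¹ ≤ (∑ i ∈ s, a i) / s.card := by
    simpa using Real.geom_mean_le_arith_mean s (fun _ ↦ 1) a (fun _ _ ↦ zero_le_one)
      (by simpa using hs.card_pos) fun i hi ↦ (ha i hi).le
  have hprod : 0 < ∏ i ∈ s, a i := Finset.prod_pos ha
  calc ((∑ i ∈ s, a i) / s.card) ^ (-(s.card * p))
      ≤ ((∏ i ∈ s, a i) ^ (s.card : ℝ)⁻¹) ^ (-(s.card * p)) :=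
        Real.rpow_le_rpow_of_nonpos (by positivity) hmean (neg_nonpos.2 (by positivity))
    _ = (∏ i ∈ s, a i) ^ (-p) := by
        rw [← Real.rpow_mul hprod.le, mul_neg, inv_mul_cancel_left₀ hc.ne']
    _ = ∏ i ∈ s, a i ^ (-p) := (Real.finsetProd_rpow s a (fun i hi ↦ (ha i hi).le) _).symm

theorem betaKernel_le_prod {ι : Type*} [Fintype ι] (hι : 2 ≤ Fintype.card ι) {w : ι → ℝ}
    (hw : ∀ k, 0 ≤ w k) {i : ι} (hl : l * ∑ k, w k = w i) (ht : 0 ≤ t) :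
    betaKernel (Fintype.card ι) (∑ k, w k) l t
      ≤ (1 + 2 * t * w i)⁻¹ * ∏ k, (1 + 2 * t * w k) ^ (-(1 / 2) : ℝ) := by
  classical
  let s := Finset.univ.erase i
  have hpos : ∀ k, 0 < 1 + 2 * t * w k := fun k ↦ by
    have := hw k
    positivity
  have hs : (s.card : ℝ) = Fintype.card ι - 1 := by
    rw [Finset.card_erase_of_mem (Finset.mem_univ i), Finset.card_univ, Nat.cast_pred (by omega)]
  have hs0 : 0 < s.card := by
    rw [Finset.card_erase_of_mem (Finset.mem_univ i), Finset.card_univ]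
    omega
  have havg : 1 + 2 * t * (∑ k, w k) * (1 - l) / s.card
      = (∑ k ∈ s, (1 + 2 * t * w k)) / s.card := by
    have hsum : ∑ k ∈ s, w k = (∑ k, w k) * (1 - l) := by
      rw [Finset.sum_erase_eq_sub (Finset.mem_univ i), ← hl]
      ring
    rw [Finset.sum_add_distrib, ← Finset.mul_sum, hsum]
    simp only [Finset.sum_const, nsmul_eq_mul, mul_one]
    field_simp
  have hsplit : (1 + 2 * t * w i) ^ (-(3 / 2) : ℝ)
      = (1 + 2 * t * w i)⁻¹ * (1 + 2 * t * w i) ^ (-(1 / 2) : ℝ) := by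
    rw [← Real.rpow_neg_one, ← Real.rpow_add (hpos i)]
    norm_num
  rw [betaKernel, ← hs, havg, mul_assoc (2 * t), mul_comm _ l, hl, hsplit,
    ← Finset.mul_prod_erase _ _ (Finset.mem_univ i),
    ← mul_assoc _ (_ ^ _) (∏ _ ∈ _, _)]
  refine (mul_comm _ _).trans_le (mul_le_mul_of_nonneg_left ?_ ?_)
  · simpa only [mul_one_div] using
      rpow_neg_avg_le_prod_rpow_neg (Finset.card_pos.1 hs0) (fun k _ ↦ hpos k) one_half_pos.le
  · have := hpos i
    positivity

theorem ofReal_gaussianBeta_mul_sum_le_lintegral {ι : Type*} [Fintype ι]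
    (hι : 2 ≤ Fintype.card ι) {w c : ι → ℝ} (hw : ∀ i, 0 ≤ w i) (hc : ∀ i, 0 ≤ c i) :
    ENNReal.ofReal (gaussianBeta (Fintype.card ι) (∑ i, w i) * ∑ i, c i)
      ≤ ∫⁻ t in Set.Ioi (0 : ℝ), ENNReal.ofReal (∑ i, c i *
          ((1 + 2 * t * w i)⁻¹ * ∏ k, (1 + 2 * t * w k) ^ (-(1 / 2) : ℝ))) := by
  set N := (Fintype.card ι : ℝ)
  set M : ℝ := ∑ i, w i
  have hM : 0 ≤ M := Finset.sum_nonneg fun i _ ↦ hw i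
  have hN : 1 ≤ N := Nat.one_le_cast.2 (one_le_two.trans hι)
  have hwM : ∀ i, w i ≤ M := fun i ↦
    Finset.single_le_sum (fun k _ ↦ hw k) (Finset.mem_univ i)
  have hl : ∀ i, w i / M ∈ Set.Icc (0 : ℝ) 1 := fun i ↦
    ⟨div_nonneg (hw i) hM, div_le_one_of_le₀ (hwM i) hM⟩
  have hlM : ∀ i, w i / M * M = w i := fun i ↦ div_mul_cancel_of_imp fun h ↦
    le_antisymm (h ▸ hwM i) (hw i)
  have hK : ∀ i, Measurable fun t ↦ ENNReal.ofReal (c i * betaKernel N M (w i / M) t) := fun i ↦ by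
    unfold betaKernel
    fun_prop
  calc ENNReal.ofReal (gaussianBeta N M * ∑ i, c i)
      = ∑ i, ENNReal.ofReal (c i) * ENNReal.ofReal (gaussianBeta N M) := by
        rw [ENNReal.ofReal_mul' (Finset.sum_nonneg fun i _ ↦ hc i), mul_comm,
          ENNReal.ofReal_sum_of_nonneg fun i _ ↦ hc i, Finset.sum_mul]
    _ ≤ ∑ i, ENNReal.ofReal (c i) *
          ∫⁻ t in Set.Ioi (0 : ℝ), ENNReal.ofReal (betaKernel N M (w i / M) t) := by
        gcongr with i
        exact ofReal_gaussianBeta_le_lintegral hN hM (hl i)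
    _ = ∫⁻ t in Set.Ioi (0 : ℝ), ∑ i, ENNReal.ofReal (c i * betaKernel N M (w i / M) t) := by
        rw [lintegral_finsetSum _ fun i _ ↦ hK i]
        simp only [ENNReal.ofReal_mul (hc _), lintegral_const_mul' _ _ ENNReal.ofReal_ne_top]
    _ ≤ _ := setLIntegral_mono_ae' measurableSet_Ioi (.of_forall fun t ht ↦ ?_)
  rw [← ENNReal.ofReal_sum_of_nonneg fun i _ ↦
    mul_nonneg (hc i) (betaKernel_nonneg hN hM (hl i) (le_of_lt ht))]
  exact ENNReal.ofReal_le_ofReal <| Finset.sum_le_sum fun i _ ↦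
    mul_le_mul_of_nonneg_left (betaKernel_le_prod hι hw (hlM i) (le_of_lt ht)) (hc i)

end Kernel

section DiagonalGaussian

variable {ι : Type*} [Fintype ι]

theorem lintegral_sq_sum_mul_exp_pi_gaussianReal (w : ι → ℝ≥0) (u : ι → ℝ) (t : ℝ≥0) :
    ∫⁻ x, ENNReal.ofReal ((∑ i, u i * x i) ^ 2 * Real.exp (-(t * ∑ i, x i ^ 2)))
        ∂(Measure.pi fun i ↦ gaussianReal 0 (w i))
      = ENNReal.ofReal (∑ i, u i ^ 2 * w i * ((1 + 2 * t * w i : ℝ)⁻¹ *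
          ∏ k, (1 + 2 * t * w k : ℝ) ^ (-(1 / 2) : ℝ))) := by
  have htilt : ∫⁻ x, ENNReal.ofReal ((∑ i, u i * x i) ^ 2 * Real.exp (-(t * ∑ i, x i ^ 2)))
        ∂(Measure.pi fun i ↦ gaussianReal 0 (w i))
      = ∫⁻ x, ENNReal.ofReal ((∑ i, u i * x i) ^ 2)
        ∂((Measure.pi fun i ↦ gaussianReal 0 (w i)).withDensity
          fun x ↦ ENNReal.ofReal (Real.exp (-(t * ∑ i, x i ^ 2)))) := by
    rw [lintegral_withDensity_eq_lintegral_mul _ (by fun_prop) (by fun_prop)]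
    exact lintegral_congr fun x ↦ by
      rw [mul_comm, ENNReal.ofReal_mul (Real.exp_pos _).le, Pi.mul_apply]
  rw [htilt, withDensity_exp_neg_mul_sum_sq_pi_gaussianReal, lintegral_smul_measure,
    ← ofReal_integral_eq_lintegral_ofReal (memLp_two_sum_mul_pi_gaussianReal _ u).integrable_sq
      (.of_forall fun _ ↦ sq_nonneg _), integral_sq_sum_mul_pi_gaussianReal,
    ENNReal.smul_def, smul_eq_mul, ← ENNReal.ofReal_coe_nnreal,
    ← ENNReal.ofReal_mul NNReal.zero_le_coe, Finset.mul_sum]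
  congr 1
  refine Finset.sum_congr rfl fun i _ ↦ ?_
  push_cast
  ring

theorem ofReal_gaussianBeta_mul_le_lintegral_pi_gaussianReal (hι : 2 ≤ Fintype.card ι)
    (w : ι → ℝ≥0) (u : ι → ℝ) :
    ENNReal.ofReal (gaussianBeta (Fintype.card ι) (∑ i, (w i : ℝ)) * ∑ i, u i ^ 2 * w i)
      ≤ ∫⁻ x, ENNReal.ofReal ((∑ i, u i * x i) ^ 2 / ∑ i, x i ^ 2)
          ∂(Measure.pi fun i ↦ gaussianReal 0 (w i)) := by
  have hzero : ∀ x : ι → ℝ, ∑ i, x i ^ 2 = 0 → (∑ i, u i * x i) ^ 2 = 0 := fun x hx ↦ by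
    have hx0 : ∀ i, x i = 0 := by
      simpa [Finset.sum_eq_zero_iff_of_nonneg, sq_nonneg] using hx
    simp [hx0]
  rw [lintegral_ofReal_div_eq_lintegral_exp (f := fun x : ι → ℝ ↦ (∑ i, u i * x i) ^ 2)
    (g := fun x : ι → ℝ ↦ ∑ i, x i ^ 2) (by fun_prop) (by fun_prop) (fun x ↦ sq_nonneg _)
    (fun x ↦ Finset.sum_nonneg fun i _ ↦ sq_nonneg _) hzero]
  refine (ofReal_gaussianBeta_mul_sum_le_lintegral hι (fun i ↦ (w i).coe_nonneg)
    fun i ↦ by positivity).trans_eq (setLIntegral_congr_fun measurableSet_Ioi fun t ht ↦ ?_)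
  lift t to ℝ≥0 using le_of_lt ht
  exact (lintegral_sq_sum_mul_exp_pi_gaussianReal w u t).symm

end DiagonalGaussian

section CenteredGaussian

open scoped RealInnerProductSpace

theorem ae_ne_zero_of_integral_norm_sq_pos {E : Type*} [NormedAddCommGroup E] [NormedSpace ℝ E]
    [CompleteSpace E] [SecondCountableTopology E] [MeasurableSpace E] [BorelSpace E] {Ω : Type*}
    [MeasurableSpace Ω] {P : Measure Ω} {X : Ω → E} (hX : HasGaussianLaw X P)
    (hpos : 0 < ∫ ω, ‖X ω‖ ^ 2 ∂P) : ∀ᵐ ω ∂P, X ω ≠ 0 := by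
  have := hX.isGaussian_map
  refine ae_of_ae_map (p := (· ≠ 0)) hX.aemeasurable ?_
  by_cases hdirac : ∃ x, P.map X = Measure.dirac x
  · obtain ⟨x, hx⟩ := hdirac
    have hnorm : ∫ ω, ‖X ω‖ ^ 2 ∂P = ‖x‖ ^ 2 := by
      rw [← integral_map (f := fun y ↦ ‖y‖ ^ 2) hX.aemeasurable (by fun_prop), hx,
        integral_dirac]
    rw [hx, ae_dirac_eq, Filter.eventually_pure]
    rintro rfl
    simp [hnorm] at hpos
  · have := IsGaussian.nullSingletonClass (μ := P.map X) (not_exists.1 hdirac)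
    exact Measure.ae_ne _ _

variable {E : Type*} [NormedAddCommGroup E] [InnerProductSpace ℝ E] {Ω : Type*}
  [MeasurableSpace Ω] {P : Measure Ω} {X : Ω → E}

theorem integral_norm_sq_eq_sum_integral_inner_sq {ι : Type*} [Fintype ι]
    (b : OrthonormalBasis ι ℝ E) (hX : MemLp X 2 P) :
    ∫ ω, ‖X ω‖ ^ 2 ∂P = ∑ i, ∫ ω, ⟪b i, X ω⟫ ^ 2 ∂P := by
  rw [← integral_finsetSum _ fun i _ ↦ (hX.const_inner (b i)).integrable_sq]
  simp only [b.sum_sq_inner_right]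

variable [MeasurableSpace E] [BorelSpace E]

theorem integrable_inner_sq_div_sq [SecondCountableTopology E] [IsFiniteMeasure P] {τ : Ω → ℝ}
    {C : ℝ} (hX : AEMeasurable X P) (hτ : AEMeasurable τ P) (hXτ : ∀ ω, ‖X ω‖ ≤ C * τ ω) (v : E) :
    Integrable (fun ω ↦ ⟪v, X ω⟫ ^ 2 / τ ω ^ 2) P := by
  have hmeas : AEMeasurable (fun ω ↦ ⟪v, X ω⟫ ^ 2 / τ ω ^ 2) P := by fun_prop
  refine .of_bound hmeas.aestronglyMeasurable ((‖v‖ * C) ^ 2) (.of_forall fun ω ↦ ?_)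
  rw [Real.norm_of_nonneg (by positivity)]
  refine div_le_of_le_mul₀ (sq_nonneg _) (sq_nonneg _) ?_
  rw [← mul_pow, ← sq_abs]
  refine pow_le_pow_left₀ (abs_nonneg _) ((abs_real_inner_le_norm v _).trans ?_) 2
  rw [mul_assoc]
  exact mul_le_mul_of_nonneg_left (hXτ ω) (norm_nonneg v)

variable [FiniteDimensional ℝ E]

theorem exists_orthonormalBasis_integral_inner_mul_inner_eq_zero (hX : MemLp X 2 P) :
    ∃ b : OrthonormalBasis (Fin (Module.finrank ℝ E)) ℝ E,
      ∀ i j, i ≠ j → ∫ ω, ⟪b i, X ω⟫ * ⟪b j, X ω⟫ ∂P = 0 := by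
  have hν : MemLp id 2 (P.map X) :=
    (memLp_map_measure_iff aestronglyMeasurable_id hX.aestronglyMeasurable.aemeasurable).2 hX
  have hC : (covarianceOperator (P.map X)).toLinearMap.IsSymmetric :=
    isPositive_covarianceOperator.isSymmetric
  refine ⟨hC.eigenvectorBasis rfl, fun i j hij ↦ ?_⟩
  have hCij := covarianceOperator_inner hν (hC.eigenvectorBasis rfl i) (hC.eigenvectorBasis rfl j)
  have happly := hC.apply_eigenvectorBasis rfl i
  rw [ContinuousLinearMap.coe_coe] at happly
  rw [integral_map hX.aestronglyMeasurable.aemeasurable (by fun_prop), happly, inner_smul_left,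
    (hC.eigenvectorBasis rfl).inner_eq_zero hij, mul_zero] at hCij
  exact hCij.symm

theorem map_inner_eq_pi_gaussianReal {ι : Type*} [Fintype ι] (hX : HasGaussianLaw X P)
    (hmean : ∫ ω, X ω ∂P = 0) {b : ι → E}
    (hb : ∀ i j, i ≠ j → ∫ ω, ⟪b i, X ω⟫ * ⟪b j, X ω⟫ ∂P = 0) :
    P.map (fun ω i ↦ ⟪b i, X ω⟫)
      = Measure.pi fun i ↦ gaussianReal 0 (∫ ω, ⟪b i, X ω⟫ ^ 2 ∂P).toNNReal := by
  have := hX.isProbabilityMeasure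
  have hmean_inner : ∀ i, ∫ ω, ⟪b i, X ω⟫ ∂P = 0 := fun i ↦ by
    rw [integral_inner hX.integrable, hmean, inner_zero_right]
  have hlaw : HasGaussianLaw (fun ω i ↦ ⟪b i, X ω⟫) P :=
    hX.map_fun (ContinuousLinearMap.pi fun i ↦ innerSL ℝ (b i))
  have hindep : iIndepFun (fun i ω ↦ ⟪b i, X ω⟫) P :=
    hlaw.iIndepFun_of_covariance_eq_zero fun i j hij ↦ by
      simp only [covariance, hmean_inner, sub_zero, hb i j hij]
  rw [hindep.map_fun_eq_pi_map fun i ↦ (hlaw.eval i).aemeasurable]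
  congr 1 with i : 1
  rw [(hlaw.eval i).map_eq_gaussianReal, hmean_inner,
    variance_of_integral_eq_zero (hlaw.eval i).aemeasurable (hmean_inner i)]

theorem gaussianBeta_mul_integral_inner_sq_le_integral_div_norm_sq
    (hE : 2 ≤ Module.finrank ℝ E) (hX : HasGaussianLaw X P) (hmean : ∫ ω, X ω ∂P = 0) (v : E) :
    gaussianBeta (Module.finrank ℝ E) (∫ ω, ‖X ω‖ ^ 2 ∂P) * ∫ ω, ⟪v, X ω⟫ ^ 2 ∂P
      ≤ ∫ ω, ⟪v, X ω⟫ ^ 2 / ‖X ω‖ ^ 2 ∂P := by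
  have := hX.isProbabilityMeasure
  have hXm := hX.aemeasurable
  obtain ⟨b, hb⟩ := exists_orthonormalBasis_integral_inner_mul_inner_eq_zero hX.memLp_two
  have hlaw := map_inner_eq_pi_gaussianReal hX hmean hb
  set w := fun i ↦ (∫ ω, ⟪b i, X ω⟫ ^ 2 ∂P).toNNReal
  have hcoord : AEMeasurable (fun ω i ↦ ⟪b i, X ω⟫) P := by fun_prop
  have hinner : ∀ ω, ∑ i, ⟪v, b i⟫ * ⟪b i, X ω⟫ = ⟪v, X ω⟫ := fun ω ↦
    b.sum_inner_mul_inner v (X ω)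
  have hmeas : Measurable fun x : Fin _ → ℝ ↦ (∑ i, ⟪v, b i⟫ * x i) ^ 2 := by fun_prop
  have hvar : ∑ i, ⟪v, b i⟫ ^ 2 * w i = ∫ ω, ⟪v, X ω⟫ ^ 2 ∂P := by
    rw [← integral_sq_sum_mul_pi_gaussianReal, ← hlaw,
      integral_map hcoord hmeas.aestronglyMeasurable]
    simp only [hinner]
  have htrace : ∑ i, (w i : ℝ) = ∫ ω, ‖X ω‖ ^ 2 ∂P := by
    rw [integral_norm_sq_eq_sum_integral_inner_sq b hX.memLp_two]
    exact Finset.sum_congr rfl fun i _ ↦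
      Real.coe_toNNReal _ (integral_nonneg fun _ ↦ sq_nonneg _)
  have hint : Integrable (fun ω ↦ ⟪v, X ω⟫ ^ 2 / ‖X ω‖ ^ 2) P :=
    integrable_inner_sq_div_sq hXm hXm.norm (fun ω ↦ (one_mul ‖X ω‖).ge) v
  have hdiag := ofReal_gaussianBeta_mul_le_lintegral_pi_gaussianReal (by simpa using hE) w
    fun i ↦ ⟪v, b i⟫
  rw [← hlaw, lintegral_map' (by fun_prop) hcoord, htrace, hvar, Fintype.card_fin] at hdiag
  simp only [hinner, b.sum_sq_inner_right] at hdiag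
  rwa [← ofReal_integral_eq_lintegral_ofReal hint (.of_forall fun ω ↦ by positivity),
    ENNReal.ofReal_le_ofReal_iff (integral_nonneg fun ω ↦ by positivity)] at hdiag

theorem gaussianBeta_mul_integral_inner_sq_le_integral_div_sq (hE : 2 ≤ Module.finrank ℝ E)
    (hX : HasGaussianLaw X P) (hmean : ∫ ω, X ω ∂P = 0) {τ : Ω → ℝ} {C : ℝ}
    (hτ : AEMeasurable τ P) (hτ0 : ∀ ω, 0 ≤ τ ω) (hτX : ∀ ω, τ ω ≤ ‖X ω‖)
    (hXτ : ∀ ω, ‖X ω‖ ≤ C * τ ω) (v : E) :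
    gaussianBeta (Module.finrank ℝ E) (∫ ω, ‖X ω‖ ^ 2 ∂P) * ∫ ω, ⟪v, X ω⟫ ^ 2 ∂P
      ≤ ∫ ω, ⟪v, X ω⟫ ^ 2 / τ ω ^ 2 ∂P := by
  have := hX.isProbabilityMeasure
  have hXm := hX.aemeasurable
  refine (gaussianBeta_mul_integral_inner_sq_le_integral_div_norm_sq hE hX hmean v).trans
    (integral_mono (integrable_inner_sq_div_sq hXm hXm.norm (fun ω ↦ (one_mul ‖X ω‖).ge) v)
      (integrable_inner_sq_div_sq hXm hτ hXτ v) fun ω ↦ ?_)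
  rcases (hτ0 ω).eq_or_lt with hzero | hpos
  · have hXω : X ω = 0 := by simpa [← hzero] using hXτ ω
    simp [hXω]
  · have := hτX ω
    dsimp only
    gcongr

end CenteredGaussian

section GaussianSeries

open scoped RealInnerProductSpace

variable {κ Ω : Type*} [Fintype κ] [MeasurableSpace Ω] {P : Measure Ω} {z : κ → Ω → ℝ}

theorem hasGaussianLaw_of_map_eq_gaussianReal {Y : Ω → ℝ} {a : ℝ} {s : ℝ≥0}
    (hY : P.map Y = gaussianReal a s) : HasGaussianLaw Y P := ⟨hY ▸ inferInstance⟩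

theorem integral_eq_of_map_eq_gaussianReal {Y : Ω → ℝ} {a : ℝ} {s : ℝ≥0}
    (hY : P.map Y = gaussianReal a s) : ∫ ω, Y ω ∂P = a := by
  rw [← integral_id_gaussianReal (μ := a) (v := s), ← hY,
    integral_map (hasGaussianLaw_of_map_eq_gaussianReal hY).aemeasurable (by fun_prop)]

section NormedSpace

variable {E : Type*} [NormedAddCommGroup E] [NormedSpace ℝ E]

theorem hasGaussianLaw_sum_smul [MeasurableSpace E] [BorelSpace E] [SecondCountableTopology E]
    (hindep : iIndepFun z P) (hz : ∀ k, HasGaussianLaw (z k) P) (b : κ → E) :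
    HasGaussianLaw (fun ω ↦ ∑ k, z k ω • b k) P := by
  simpa using (hindep.hasGaussianLaw hz).map_fun
    (∑ k, (ContinuousLinearMap.proj k).smulRight (b k) : (κ → ℝ) →L[ℝ] E)

theorem integral_sum_smul_eq_zero [CompleteSpace E] (hz : ∀ k, Integrable (z k) P)
    (hmean : ∀ k, ∫ ω, z k ω ∂P = 0) (b : κ → E) : ∫ ω, ∑ k, z k ω • b k ∂P = 0 := by
  rw [integral_finsetSum _ fun k _ ↦ (hz k).smul_const (b k)]
  simp only [integral_smul_const, hmean, zero_smul, Finset.sum_const_zero]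

end NormedSpace

variable {E : Type*} [NormedAddCommGroup E] [InnerProductSpace ℝ E] {s : κ → ℝ≥0}

theorem integral_inner_sum_smul_sq (hindep : iIndepFun z P)
    (hz : ∀ k, P.map (z k) = gaussianReal 0 (s k)) (b : κ → E) (v : E) :
    ∫ ω, ⟪v, ∑ k, z k ω • b k⟫ ^ 2 ∂P = ∑ k, ⟪v, b k⟫ ^ 2 * s k := by
  have hzm : ∀ k, AEMeasurable (z k) P := fun k ↦
    (hasGaussianLaw_of_map_eq_gaussianReal (hz k)).aemeasurable
  have hlaw : P.map (fun ω k ↦ z k ω) = Measure.pi fun k ↦ gaussianReal 0 (s k) := by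
    simp only [hindep.map_fun_eq_pi_map hzm, hz]
  have hmeas : Measurable fun x : κ → ℝ ↦ (∑ k, ⟪v, b k⟫ * x k) ^ 2 := by fun_prop
  rw [← integral_sq_sum_mul_pi_gaussianReal, ← hlaw,
    integral_map (by fun_prop) hmeas.aestronglyMeasurable]
  simp only [inner_sum, inner_smul_right, mul_comm]

theorem integral_norm_sum_smul_sq [FiniteDimensional ℝ E] [MeasurableSpace E] [BorelSpace E]
    (hindep : iIndepFun z P) (hz : ∀ k, P.map (z k) = gaussianReal 0 (s k)) (b : κ → E) :
    ∫ ω, ‖∑ k, z k ω • b k‖ ^ 2 ∂P = ∑ k, ‖b k‖ ^ 2 * s k := by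
  have e := stdOrthonormalBasis ℝ E
  have hlaw : HasGaussianLaw (fun ω ↦ ∑ k, z k ω • b k) P :=
    hasGaussianLaw_sum_smul hindep (fun k ↦ hasGaussianLaw_of_map_eq_gaussianReal (hz k)) b
  rw [integral_norm_sq_eq_sum_integral_inner_sq e hlaw.memLp_two]
  simp only [integral_inner_sum_smul_sq hindep hz, ← e.sum_sq_inner_right, Finset.sum_mul]
  exact Finset.sum_comm

end GaussianSeries

section SpectralNorm

variable {n m : ℕ}

theorem sigmaMax_nonneg (G : Matrix (Fin n) (Fin m) ℝ) : 0 ≤ sigmaMax G := norm_nonneg _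

theorem sigmaMax_le_norm_toLp_vecM (G : Matrix (Fin n) (Fin m) ℝ) :
    sigmaMax G ≤ ‖WithLp.toLp 2 (vecM G)‖ := by
  refine ContinuousLinearMap.opNorm_le_bound _ (norm_nonneg _) fun x ↦ ?_
  rw [← sq_le_sq₀ (norm_nonneg _) (by positivity), mul_pow]
  simp only [EuclideanSpace.real_norm_sq_eq]
  rw [Fintype.sum_prod_type_right, Finset.sum_mul]
  exact Finset.sum_le_sum fun i _ ↦ Finset.sum_mul_sq_le_sq_mul_sq Finset.univ (G i) x

theorem norm_toLp_vecM_le (G : Matrix (Fin n) (Fin m) ℝ) :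
    ‖WithLp.toLp 2 (vecM G)‖ ≤ √m * sigmaMax G := by
  let L := LinearMap.toContinuousLinearMap (Matrix.toEuclideanLin G)
  have hcol : ∀ j, ∑ i, G i j ^ 2 ≤ sigmaMax G ^ 2 := fun j ↦ by
    have hL : ‖L (EuclideanSpace.single j 1)‖ ≤ ‖L‖ := by
      simpa using L.le_opNorm (EuclideanSpace.single j (1 : ℝ))
    have := pow_le_pow_left₀ (norm_nonneg _) hL 2
    simpa [L, sigmaMax, EuclideanSpace.real_norm_sq_eq, Matrix.toLpLin_apply] using this
  rw [← sq_le_sq₀ (norm_nonneg _) (mul_nonneg (Real.sqrt_nonneg _) (sigmaMax_nonneg G)), mul_pow,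
    Real.sq_sqrt (Nat.cast_nonneg m), EuclideanSpace.real_norm_sq_eq, Fintype.sum_prod_type]
  exact (Finset.sum_le_sum fun j _ ↦ hcol j).trans (by simp)

theorem continuous_sigmaMax : Continuous (sigmaMax : Matrix (Fin n) (Fin m) ℝ → ℝ) :=
  (LinearMap.toContinuousLinearMap.toLinearMap ∘ₗ
    (Matrix.toEuclideanLin (𝕜 := ℝ) (m := Fin n) (n := Fin m)).toLinearMap)
    |>.continuous_of_finiteDimensional.norm

variable {κ : Type*} [Fintype κ]

theorem aemeasurable_sigmaMax_sum_smul {Ω : Type*} [MeasurableSpace Ω] {P : Measure Ω}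
    {z : κ → Ω → ℝ} (hz : ∀ k, AEMeasurable (z k) P) (B : κ → Matrix (Fin n) (Fin m) ℝ) :
    AEMeasurable (fun ω ↦ sigmaMax (∑ k, z k ω • B k)) P :=
  have hcont : Continuous fun x : κ → ℝ ↦ sigmaMax (∑ k, x k • B k) :=
    continuous_sigmaMax.comp (by fun_prop)
  hcont.measurable.comp_aemeasurable (aemeasurable_pi_lambda (fun ω k ↦ z k ω) hz)

theorem toLp_vecM_sum_smul (x : κ → ℝ) (B : κ → Matrix (Fin n) (Fin m) ℝ) :
    WithLp.toLp 2 (vecM (∑ k, x k • B k)) = ∑ k, x k • WithLp.toLp 2 (vecM (B k)) := by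
  ext p
  simp [vecM, Matrix.sum_apply]

theorem trace_sum_vecMulVec_vecM (B : κ → Matrix (Fin n) (Fin m) ℝ) :
    (∑ k, vecMulVec (vecM (B k)) (vecM (B k))).trace = (∑ k, (B k)ᵀ * B k).trace := by
  simp only [Matrix.trace_sum]
  refine Finset.sum_congr rfl fun k _ ↦ ?_
  simp [Matrix.trace, vecMulVec_apply, Matrix.mul_apply, vecM, Fintype.sum_prod_type]

end SpectralNorm

section RankOne

variable {κ α : Type*} [Fintype κ] [Fintype α]

theorem trace_sum_vecMulVec_self (b : κ → α → ℝ) :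
    (∑ k, vecMulVec (b k) (b k)).trace = ∑ k, ‖WithLp.toLp 2 (b k)‖ ^ 2 := by
  simp only [Matrix.trace_sum, trace_vecMulVec, dotProduct, ← sq, EuclideanSpace.real_norm_sq_eq]

theorem dotProduct_sum_vecMulVec_self_mulVec (b : κ → α → ℝ) (v : α → ℝ) :
    v ⬝ᵥ (∑ k, vecMulVec (b k) (b k)) *ᵥ v = ∑ k, (v ⬝ᵥ b k) ^ 2 := by
  simp [Matrix.sum_mulVec, dotProduct_sum, vecMulVec_mulVec, dotProduct_comm, sq]

end RankOne

theorem stmt4_general {κ : Type*} [Fintype κ] {n m : ℕ} (hnm : 2 ≤ n * m)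
    (B : κ → Matrix (Fin n) (Fin m) ℝ) {Ω : Type*} [MeasurableSpace Ω] (μ : Measure Ω)
    (z : κ → Ω → ℝ) (hindep : iIndepFun z μ) (hgauss : ∀ k, μ.map (z k) = gaussianReal 0 1)
    (W : Matrix (Fin m × Fin n) (Fin m × Fin n) ℝ)
    (hW : W = ∑ k, vecMulVec (vecM (B k)) (vecM (B k))) (htrace : 0 < W.trace) :
    (∀ᵐ ω ∂μ, 0 < sigmaMax (∑ k, z k ω • B k)) ∧
    ∀ v : Fin m × Fin n → ℝ,
      gaussianBeta (n * m) W.trace * (v ⬝ᵥ W *ᵥ v)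
        ≤ ∫ ω, (∑ p, v p * vecM (∑ k, z k ω • B k) p) ^ 2 / sigmaMax (∑ k, z k ω • B k) ^ 2 ∂μ := by
  have hz k : HasGaussianLaw (z k) μ := hasGaussianLaw_of_map_eq_gaussianReal (hgauss k)
  let b k := WithLp.toLp 2 (vecM (B k))
  let X ω := ∑ k, z k ω • b k
  have hX : HasGaussianLaw X μ := hasGaussianLaw_sum_smul hindep hz b
  have hmean : ∫ ω, X ω ∂μ = 0 := integral_sum_smul_eq_zero (fun k ↦ (hz k).integrable)
    (fun k ↦ integral_eq_of_map_eq_gaussianReal (hgauss k)) b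
  have hXG ω : X ω = WithLp.toLp 2 (vecM (∑ k, z k ω • B k)) := (toLp_vecM_sum_smul _ B).symm
  have htr : W.trace = ∫ ω, ‖X ω‖ ^ 2 ∂μ := by
    rw [hW, trace_sum_vecMulVec_self, integral_norm_sum_smul_sq (s := 1) hindep hgauss]
    simp [b]
  have hvar (v) : v ⬝ᵥ W *ᵥ v = ∫ ω, inner ℝ (WithLp.toLp 2 v) (X ω) ^ 2 ∂μ := by
    simp [X, b, hW, dotProduct_sum_vecMulVec_self_mulVec, integral_inner_sum_smul_sq hindep hgauss,
      EuclideanSpace.inner_toLp_toLp, dotProduct_comm]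
  have hle ω : ‖X ω‖ ≤ √m * sigmaMax (∑ k, z k ω • B k) := hXG ω ▸ norm_toLp_vecM_le _
  refine ⟨(ae_ne_zero_of_integral_norm_sq_pos hX (htr ▸ htrace)).mono fun ω hω ↦
    pos_of_mul_pos_right ((norm_pos_iff.2 hω).trans_le (hle ω)) (Real.sqrt_nonneg _), fun v ↦ ?_⟩
  have hmain := gaussianBeta_mul_integral_inner_sq_le_integral_div_sq
    (by simpa [mul_comm] using hnm) hX hmean
    (aemeasurable_sigmaMax_sum_smul (fun k ↦ (hz k).aemeasurable) B)
    (fun ω ↦ sigmaMax_nonneg _) (fun ω ↦ hXG ω ▸ sigmaMax_le_norm_toLp_vecM _) hle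
    (WithLp.toLp 2 v)
  rw [← htr, ← hvar] at hmain
  simpa [hXG, EuclideanSpace.inner_toLp_toLp, dotProduct, mul_comm] using hmain

/-- Theorem 2.2, main inequality.
For a Gaussian matrix series `G = ∑ₖ zₖ Bₖ` with `∑ₖ Bₖᵀ Bₖ = Iₘ`,
`∑ₖ Bₖ Bₖᵀ ⪯ Iₙ` and covariance `W = ∑ₖ vec(Bₖ)vec(Bₖ)ᵀ`, we have
`σmax(G) > 0` a.s. and `E[vec(G)vec(G)ᵀ/σmax(G)²] ⪰ β_{n,m} W`. -/
theorem stmt4 {n m r : ℕ} (hm : 1 ≤ m) (hmn : m ≤ n) (hnm2 : 2 ≤ n * m)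
    (B : Fin r → Matrix (Fin n) (Fin m) ℝ)
    (hBtB : ∑ k, (B k)ᵀ * B k = 1)
    (hBBt : ((1 : Matrix (Fin n) (Fin n) ℝ) - ∑ k, B k * (B k)ᵀ).PosSemidef)
    {Ω : Type*} [MeasurableSpace Ω] (μ : Measure Ω) [IsProbabilityMeasure μ]
    (z : Fin r → Ω → ℝ)
    (hindep : iIndepFun z μ)
    (hgauss : ∀ k, Measure.map (z k) μ = gaussianReal 0 1)
    (W : Matrix (Fin m × Fin n) (Fin m × Fin n) ℝ)
    (hW : W = ∑ k, Matrix.vecMulVec (vecM (B k)) (vecM (B k))) :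
    (∀ᵐ ω ∂μ, 0 < sigmaMax (∑ k, z k ω • B k)) ∧
    ∀ v : Fin m × Fin n → ℝ,
      betaNM n m * (v ⬝ᵥ W.mulVec v)
        ≤ ∫ ω, (∑ p : Fin m × Fin n, v p * vecM (∑ k, z k ω • B k) p) ^ 2
              / (sigmaMax (∑ k, z k ω • B k)) ^ 2 ∂μ := by
  have htrace : W.trace = m := by
    rw [hW, trace_sum_vecMulVec_vecM, hBtB, trace_one, Fintype.card_fin]
  have h := stmt4_general hnm2 B μ z hindep hgauss W hW (by rw [htrace]; exact_mod_cast hm)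
  rwa [htrace] at h
end
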